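/- arXiv:1806.04664 — 2 statements merged into one kernel-verified Lean document; each statement's English description precedes it below -/
import Mathlib

section
/- Let N ≥ 1 be an integer and let u, v : closure(D⁺) → ℝ^N be C¹ maps that agree on the arc ∂^A (i.e. u(x) = v(x) for all x with |x| = 1, x₂ ≥ 0). Then ∫_{D⁺} |v(x) − u(x)|² / (1 − |x|)² dx ≤ 4 ∫_{D⁺} |∇(v − u)(x)|² dx. (Hardy's inequality on the half disk, Lemma 2.3 of the paper.) -/
open MeasureTheory

/-- The open upper half unit disk `D⁺ = {x ∈ ℝ² : |x| < 1, x₂ > 0}`. -/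
def halfDisk : Set (EuclideanSpace ℝ (Fin 2)) := {x | ‖x‖ < 1 ∧ 0 < x 1}

/-- `|∇w|²(x) = Σ_{i=1,2} Σ_{j=1,…,N} (∂w^j/∂x_i)²`, i.e. the sum of the squared norms of the
partial derivatives of `w` at `x`. -/
noncomputable def gradSq {N : ℕ} (w : EuclideanSpace ℝ (Fin 2) → EuclideanSpace ℝ (Fin N))
    (x : EuclideanSpace ℝ (Fin 2)) : ℝ :=
  ∑ i : Fin 2, ‖fderiv ℝ w x (EuclideanSpace.single i (1 : ℝ))‖ ^ 2

section helpers

open MeasureTheory Set Filter Topology Real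

lemma hardy_ray {F : Type*} [NormedAddCommGroup F] [InnerProductSpace ℝ F]
    (f f' : ℝ → F) (g : ℝ → ℝ) (C K : ℝ)
    (hf : ∀ r ∈ Ioo (0:ℝ) 1, HasDerivAt f (f' r) r)
    (hb : ∀ r ∈ Ioo (0:ℝ) 1, ‖f r‖ ≤ C * (1 - r))
    (hg : ∀ r ∈ Ioo (0:ℝ) 1, ‖f' r‖ ^ 2 ≤ g r)
    (hgc : ContinuousOn g (Ioo (0:ℝ) 1))
    (hgb : ∀ r ∈ Ioo (0:ℝ) 1, g r ≤ K) :
    ∫⁻ r in Ioo (0:ℝ) 1, ENNReal.ofReal r * ENNReal.ofReal (‖f r‖ ^ 2 / (1 - r) ^ 2) ≤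
      4 * ∫⁻ r in Ioo (0:ℝ) 1, ENNReal.ofReal r * ENNReal.ofReal (g r) := by
  set G : ℝ → ℝ := fun r => r * ‖f r‖ ^ 2 / (1 - r) with hG
  set A : ℝ → ℝ := fun r => r * (‖f r‖ ^ 2 / (1 - r) ^ 2) with hA
  set B : ℝ → ℝ := fun r => r * g r with hB
  have hfc : ContinuousOn f (Ioo (0:ℝ) 1) := fun r hr => (hf r hr).continuousAt.continuousWithinAt
  have hne : ∀ r ∈ Ioo (0:ℝ) 1, 1 - r ≠ 0 := fun r hr => by linarith [hr.2]
  have hAc : ContinuousOn A (Ioo (0:ℝ) 1) := by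
    apply continuousOn_id.mul
    apply (hfc.norm.pow 2).div (by fun_prop)
    intro r hr
    exact pow_ne_zero 2 (hne r hr)
  have hBc : ContinuousOn B (Ioo (0:ℝ) 1) := continuousOn_id.mul hgc
  have hf2 : ∀ r ∈ Ioo (0:ℝ) 1, ‖f r‖ ^ 2 ≤ C ^ 2 * (1 - r) ^ 2 := fun r hr => by
    rw [← mul_pow]
    exact pow_le_pow_left₀ (norm_nonneg _) (hb r hr) 2
  have hA0 : ∀ r ∈ Ioo (0:ℝ) 1, 0 ≤ A r := fun r hr =>
    mul_nonneg hr.1.le (by positivity)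
  have hB0 : ∀ r ∈ Ioo (0:ℝ) 1, 0 ≤ B r := fun r hr =>
    mul_nonneg hr.1.le ((sq_nonneg _).trans (hg r hr))
  have hAi : IntegrableOn A (Ioo (0:ℝ) 1) := by
    refine IntegrableOn.of_bound (by simp)
      (hAc.aestronglyMeasurable measurableSet_Ioo) (C ^ 2) ?_
    refine (ae_restrict_iff' measurableSet_Ioo).2 (Eventually.of_forall fun r hr => ?_)
    rw [norm_of_nonneg (hA0 r hr)]
    have h1 : ‖f r‖ ^ 2 / (1 - r) ^ 2 ≤ C ^ 2 := by
      rw [div_le_iff₀ (by have := hne r hr; positivity)]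
      exact hf2 r hr
    have h2 : 0 ≤ ‖f r‖ ^ 2 / (1 - r) ^ 2 := by positivity
    show r * (‖f r‖ ^ 2 / (1 - r) ^ 2) ≤ C ^ 2
    nlinarith [hr.1, hr.2]
  have hBi : IntegrableOn B (Ioo (0:ℝ) 1) := by
    refine IntegrableOn.of_bound (by simp)
      (hBc.aestronglyMeasurable measurableSet_Ioo) (K) ?_
    refine (ae_restrict_iff' measurableSet_Ioo).2 (Eventually.of_forall fun r hr => ?_)
    rw [norm_of_nonneg (hB0 r hr)]
    have h2 : 0 ≤ g r := (sq_nonneg _).trans (hg r hr)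
    show r * g r ≤ K
    nlinarith [hr.1, hr.2, hgb r hr]
  -- boundary behaviour
  have hGb : ∀ r ∈ Icc (0:ℝ) 1, ‖G r‖ ≤ C ^ 2 * (r * (1 - r)) := by
    intro r hr
    rcases eq_or_lt_of_le hr.1 with h | h
    · simp [hG, ← h]
    rcases eq_or_lt_of_le hr.2 with h' | h'
    · simp [hG, h']
    have h1 : 0 < 1 - r := by linarith
    rw [norm_of_nonneg (by positivity)]
    show r * ‖f r‖ ^ 2 / (1 - r) ≤ _
    rw [div_le_iff₀ h1]
    nlinarith [mul_le_mul_of_nonneg_left (hf2 r ⟨h, h'⟩) h.le]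
  have hGc : ContinuousOn G (Icc (0:ℝ) 1) := by
    have key : ∀ r : ℝ, r * (1 - r) = 0 → G r = 0 → ContinuousWithinAt G (Icc 0 1) r := by
      intro r hr hGr
      unfold ContinuousWithinAt
      rw [hGr]
      apply squeeze_zero_norm' (a := fun r => C ^ 2 * (r * (1 - r)))
      · filter_upwards [self_mem_nhdsWithin] with s hs using hGb s hs
      · have : Continuous fun r : ℝ => C ^ 2 * (r * (1 - r)) := by fun_prop
        have h := this.continuousWithinAt (s := Icc 0 1) (x := r)
        unfold ContinuousWithinAt at h
        simpa [hr] using h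
    intro r hr
    rcases eq_or_lt_of_le hr.1 with h | h
    · exact key r (by simp [← h]) (by simp [hG, ← h])
    rcases eq_or_lt_of_le hr.2 with h' | h'
    · exact key r (by simp [h']) (by simp [hG, h'])
    have hc := (hf r ⟨h, h'⟩).continuousAt
    apply ContinuousAt.continuousWithinAt
    exact (continuousAt_id.mul (hc.norm.pow 2)).div (by fun_prop) (hne r ⟨h, h'⟩)
  have hGd : ∀ r ∈ Ioo (0:ℝ) 1, HasDerivAt G
      (((1 * ‖f r‖ ^ 2 + r * (2 * inner ℝ (f r) (f' r))) * (1 - r) - r * ‖f r‖ ^ 2 * (-1)) /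
        (1 - r) ^ 2) r := by
    intro r hr
    have h1 := (hf r hr).norm_sq
    exact ((hasDerivAt_id r).mul h1).div ((hasDerivAt_id r).const_sub 1) (hne r hr)
  have hle : ∀ r ∈ Ioo (0:ℝ) 1, 1 / 2 * A r - 2 * B r ≤
      (((1 * ‖f r‖ ^ 2 + r * (2 * inner ℝ (f r) (f' r))) * (1 - r) - r * ‖f r‖ ^ 2 * (-1)) /
        (1 - r) ^ 2) := by
    intro r hr
    have h1 : 0 < 1 - r := by linarith [hr.2]
    have hin : -(‖f r‖ * ‖f' r‖) ≤ inner ℝ (f r) (f' r) :=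
      neg_le_of_abs_le (abs_real_inner_le_norm _ _)
    have hr0 := hr.1
    have hgr := hg r hr
    rw [le_div_iff₀ (by positivity)]
    have e : (1 / 2 * A r - 2 * B r) * (1 - r) ^ 2 =
        r * (1 / 2 * ‖f r‖ ^ 2 - 2 * (g r * (1 - r) ^ 2)) := by
      simp only [hA, hB]
      field_simp
    rw [e]
    have h3 : ‖f' r‖ ^ 2 * (1 - r) ^ 2 ≤ g r * (1 - r) ^ 2 := by gcongr
    have h4 : -(‖f r‖ * ‖f' r‖) * (1 - r) ≤ inner ℝ (f r) (f' r) * (1 - r) := by gcongr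
    have h5 : 0 ≤ ‖f r‖ ^ 2 * (1 - r) := by positivity
    have h6 : 1 / 2 * ‖f r‖ ^ 2 - 2 * (g r * (1 - r) ^ 2) ≤
        2 * (inner ℝ (f r) (f' r) * (1 - r)) + ‖f r‖ ^ 2 := by
      nlinarith [sq_nonneg (‖f r‖ - 2 * (‖f' r‖ * (1 - r)))]
    nlinarith [mul_le_mul_of_nonneg_left h6 hr0.le]
  have hint : IntegrableOn (fun r => 1 / 2 * A r - 2 * B r) (Ioo (0:ℝ) 1) :=
    (hAi.const_mul _).sub (hBi.const_mul _)
  have main := intervalIntegral.integral_le_sub_of_hasDeriv_right_of_le (zero_le_one' ℝ) hGc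
    (fun r hr => (hGd r hr).hasDerivWithinAt) ((integrableOn_Icc_iff_integrableOn_Ioo (by simp) (by simp)).2 hint) hle
  have hG0 : G 1 - G 0 = 0 := by simp [hG]
  rw [hG0, intervalIntegral.integral_of_le zero_le_one, integral_Ioc_eq_integral_Ioo,
    integral_sub (hAi.const_mul _) (hBi.const_mul _), integral_const_mul, integral_const_mul] at main
  have hAB : ∫ r in Ioo (0:ℝ) 1, A r ≤ 4 * ∫ r in Ioo (0:ℝ) 1, B r := by linarith
  have eA : ∫⁻ r in Ioo (0:ℝ) 1, ENNReal.ofReal r * ENNReal.ofReal (‖f r‖ ^ 2 / (1 - r) ^ 2) =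
      ENNReal.ofReal (∫ r in Ioo (0:ℝ) 1, A r) := by
    rw [ofReal_integral_eq_lintegral_ofReal hAi
      ((ae_restrict_iff' measurableSet_Ioo).2 (Eventually.of_forall hA0))]
    refine setLIntegral_congr_fun measurableSet_Ioo fun r hr => ?_
    exact (ENNReal.ofReal_mul hr.1.le).symm
  have eB : ∫⁻ r in Ioo (0:ℝ) 1, ENNReal.ofReal r * ENNReal.ofReal (g r) =
      ENNReal.ofReal (∫ r in Ioo (0:ℝ) 1, B r) := by
    rw [ofReal_integral_eq_lintegral_ofReal hBi
      ((ae_restrict_iff' measurableSet_Ioo).2 (Eventually.of_forall hB0))]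
    refine setLIntegral_congr_fun measurableSet_Ioo fun r hr => ?_
    exact (ENNReal.ofReal_mul hr.1.le).symm
  rw [eA, eB]
  calc _ ≤ ENNReal.ofReal (4 * ∫ r in Ioo (0:ℝ) 1, B r) := ENNReal.ofReal_le_ofReal hAB
    _ = _ := by rw [ENNReal.ofReal_mul (by norm_num)]; norm_num

/-- Polar coordinates on the Euclidean plane. -/
lemma lintegral_polar (H : EuclideanSpace ℝ (Fin 2) → ENNReal) (hH : Measurable H) :
    ∫⁻ x, H x = ∫⁻ θ in Ioo (-π) π, ∫⁻ r in Ioi (0:ℝ),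
      ENNReal.ofReal r * H !₂[r * cos θ, r * sin θ] := by
  have m1 : MeasurePreserving (fun p : ℝ × ℝ => (!₂[p.1, p.2] : EuclideanSpace ℝ (Fin 2))) := by
    have h1 := (PiLp.volume_preserving_toLp (Fin 2)).comp (volume_preserving_finTwoArrow ℝ).symm
    exact h1
  have hm : Measurable fun p : ℝ × ℝ => (!₂[p.1, p.2] : EuclideanSpace ℝ (Fin 2)) := m1.measurable
  rw [← m1.lintegral_comp hH, ← lintegral_comp_polarCoord_symm, polarCoord_target,
    Measure.volume_eq_prod, setLIntegral_prod_symm]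
  · rfl
  · apply Measurable.aemeasurable
    have h2 : Measurable fun p : ℝ × ℝ => ENNReal.ofReal p.1 := by fun_prop
    exact h2.mul ((hH.comp hm).comp continuous_polarCoord_symm.measurable)

lemma norm_polar (r θ : ℝ) (hr : 0 ≤ r) :
    ‖(!₂[r * cos θ, r * sin θ] : EuclideanSpace ℝ (Fin 2))‖ = r := by
  rw [EuclideanSpace.norm_eq, Fin.sum_univ_two]
  simp only [Real.norm_eq_abs, sq_abs]
  have : (r * cos θ) ^ 2 + (r * sin θ) ^ 2 = r ^ 2 := by
    nlinarith [sin_sq_add_cos_sq θ]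
  simp [this, hr]

lemma mem_halfDisk_polar {r θ : ℝ} (hr : 0 < r) (hθ : θ ∈ Ioo 0 π) :
    (!₂[r * cos θ, r * sin θ] : EuclideanSpace ℝ (Fin 2)) ∈ halfDisk ↔ r < 1 := by
  unfold halfDisk
  rw [mem_ofPred_eq, norm_polar r θ hr.le]
  have : 0 < r * sin θ := mul_pos hr (sin_pos_of_pos_of_lt_pi hθ.1 hθ.2)
  simp [this]

lemma notMem_halfDisk_polar {r θ : ℝ} (hr : 0 < r) (hθ : θ ∈ Ioo (-π) π) (h : θ ≤ 0) :
    (!₂[r * cos θ, r * sin θ] : EuclideanSpace ℝ (Fin 2)) ∉ halfDisk := by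
  unfold halfDisk
  rw [mem_ofPred_eq]
  have : r * sin θ ≤ 0 :=
    mul_nonpos_of_nonneg_of_nonpos hr.le (sin_nonpos_of_nonpos_of_neg_pi_le h hθ.1.le)
  simp [this]

lemma lintegral_ray (F : EuclideanSpace ℝ (Fin 2) → ENNReal) {θ : ℝ} (hθ : θ ∈ Ioo 0 π) :
    ∫⁻ r in Ioi (0:ℝ), ENNReal.ofReal r * halfDisk.indicator F !₂[r * cos θ, r * sin θ] =
    ∫⁻ r in Ioo (0:ℝ) 1, ENNReal.ofReal r * F !₂[r * cos θ, r * sin θ] := by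
  rw [← lintegral_indicator measurableSet_Ioi, ← lintegral_indicator measurableSet_Ioo]
  congr 1
  funext r
  by_cases hr : 0 < r
  · by_cases h1 : r < 1
    · rw [indicator_of_mem (mem_Ioi.2 hr), indicator_of_mem (show r ∈ Ioo (0:ℝ) 1 from ⟨hr, h1⟩),
        indicator_of_mem ((mem_halfDisk_polar hr hθ).2 h1)]
    · rw [indicator_of_mem (mem_Ioi.2 hr), indicator_of_notMem (show r ∉ Ioo (0:ℝ) 1 from fun h => h1 h.2),
        indicator_of_notMem (fun h => h1 ((mem_halfDisk_polar hr hθ).1 h)), mul_zero]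
  · rw [indicator_of_notMem (show r ∉ Ioi (0:ℝ) from hr),
      indicator_of_notMem (show r ∉ Ioo (0:ℝ) 1 from fun h => hr h.1)]

lemma isOpen_halfDisk : IsOpen halfDisk := by
  have h2 : Continuous fun x : EuclideanSpace ℝ (Fin 2) => x 1 := by fun_prop
  exact (isOpen_lt continuous_norm continuous_const).inter (isOpen_lt continuous_const h2)

lemma convex_halfDisk : Convex ℝ halfDisk := by
  have h1 : Convex ℝ (Metric.ball (0 : EuclideanSpace ℝ (Fin 2)) 1) := convex_ball _ _
  have h2 : Convex ℝ {x : EuclideanSpace ℝ (Fin 2) | 0 < x 1} :=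
    convex_halfSpace_gt (f := fun x : EuclideanSpace ℝ (Fin 2) => x 1) ⟨by simp, by simp⟩ 0
  have : halfDisk = Metric.ball (0 : EuclideanSpace ℝ (Fin 2)) 1 ∩ {x | 0 < x 1} := by
    ext x; simp [halfDisk]
  rw [this]
  exact h1.inter h2

lemma isBounded_halfDisk : Bornology.IsBounded halfDisk :=
  (Metric.isBounded_ball (x := (0 : EuclideanSpace ℝ (Fin 2))) (r := 1)).subset
    fun x (hx : x ∈ halfDisk) => by simpa using hx.1

lemma halfDisk_nonempty : halfDisk.Nonempty :=
  ⟨_, (mem_halfDisk_polar (r := 1 / 2) (θ := π / 2) (by norm_num)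
    ⟨by positivity, by linarith [pi_pos]⟩).2 (by norm_num)⟩

lemma arc_mem_closure {θ : ℝ} (hθ : θ ∈ Ioo 0 π) :
    (!₂[cos θ, sin θ] : EuclideanSpace ℝ (Fin 2)) ∈ closure halfDisk := by
  have hc : Continuous fun r : ℝ => (!₂[r * cos θ, r * sin θ] : EuclideanSpace ℝ (Fin 2)) := by
    fun_prop
  have ht : Tendsto (fun r : ℝ => (!₂[r * cos θ, r * sin θ] : EuclideanSpace ℝ (Fin 2)))
      (𝓝[<] 1) (𝓝 !₂[cos θ, sin θ]) := by
    have := (hc.tendsto 1).mono_left (nhdsWithin_le_nhds (s := Iio 1))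
    simpa using this
  refine mem_closure_of_tendsto ht ?_
  filter_upwards [Ioo_mem_nhdsLT (show (0:ℝ) < 1 by norm_num)] with r hr
  exact (mem_halfDisk_polar hr.1 hθ).2 hr.2

/-- Squared radial derivative is bounded by the squared gradient. -/
lemma radial_le_gradSq {N : ℕ} (w : EuclideanSpace ℝ (Fin 2) → EuclideanSpace ℝ (Fin N))
    (x : EuclideanSpace ℝ (Fin 2)) (θ : ℝ) :
    ‖fderiv ℝ w x !₂[cos θ, sin θ]‖ ^ 2 ≤ gradSq w x := by
  have e : (!₂[cos θ, sin θ] : EuclideanSpace ℝ (Fin 2)) =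
      cos θ • EuclideanSpace.single 0 (1:ℝ) + sin θ • EuclideanSpace.single 1 (1:ℝ) := by
    ext i; fin_cases i <;> simp
  unfold gradSq
  rw [e, map_add, map_smul, map_smul, Fin.sum_univ_two]
  set a := fderiv ℝ w x (EuclideanSpace.single 0 (1:ℝ))
  set b := fderiv ℝ w x (EuclideanSpace.single 1 (1:ℝ))
  have h1 : ‖cos θ • a + sin θ • b‖ ≤ |cos θ| * ‖a‖ + |sin θ| * ‖b‖ := by
    refine (norm_add_le _ _).trans ?_
    rw [norm_smul, norm_smul, Real.norm_eq_abs, Real.norm_eq_abs]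
  have h2 := pow_le_pow_left₀ (norm_nonneg _) h1 2
  have h3 : |cos θ| ^ 2 + |sin θ| ^ 2 = 1 := by
    rw [sq_abs, sq_abs]; exact cos_sq_add_sin_sq θ
  have h4 : (|cos θ| * ‖a‖ + |sin θ| * ‖b‖) ^ 2 + (|cos θ| * ‖b‖ - |sin θ| * ‖a‖) ^ 2 =
      (|cos θ| ^ 2 + |sin θ| ^ 2) * (‖a‖ ^ 2 + ‖b‖ ^ 2) := by ring
  rw [h3, one_mul] at h4
  nlinarith [sq_nonneg (|cos θ| * ‖b‖ - |sin θ| * ‖a‖)]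

lemma hardy_halfDisk {N : ℕ} (w : EuclideanSpace ℝ (Fin 2) → EuclideanSpace ℝ (Fin N))
    (hw : ContDiffOn ℝ 1 w (closure halfDisk))
    (h0 : ∀ x : EuclideanSpace ℝ (Fin 2), ‖x‖ = 1 → 0 ≤ x 1 → w x = 0) :
    (∫ x in halfDisk, ‖w x‖ ^ 2 / (1 - ‖x‖) ^ 2) ≤ 4 * ∫ x in halfDisk, gradSq w x := by
  have hopen := isOpen_halfDisk
  have hms := hopen.measurableSet
  have hcomp : IsCompact (closure halfDisk) := isBounded_halfDisk.isCompact_closure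
  have hconv : Convex ℝ (closure halfDisk) := convex_halfDisk.closure
  have huniq : UniqueDiffOn ℝ (closure halfDisk) := uniqueDiffOn_convex hconv
    (halfDisk_nonempty.mono (hopen.subset_interior_iff.2 subset_closure))
  obtain ⟨C, hC⟩ := hcomp.exists_bound_of_continuousOn
    (hw.continuousOn_fderivWithin huniq le_rfl)
  have hfd : ∀ x ∈ halfDisk, fderivWithin ℝ w (closure halfDisk) x = fderiv ℝ w x := fun x hx =>
    fderivWithin_of_mem_nhds (mem_of_superset (hopen.mem_nhds hx) subset_closure)
  have hC' : ∀ x ∈ halfDisk, ‖fderiv ℝ w x‖ ≤ C := fun x hx => by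
    rw [← hfd x hx]; exact hC x (subset_closure hx)
  have hwo : ContDiffOn ℝ 1 w halfDisk := hw.mono subset_closure
  have hdiff : ∀ x ∈ halfDisk, DifferentiableAt ℝ w x := fun x hx =>
    (hwo.differentiableOn one_ne_zero).differentiableAt (hopen.mem_nhds hx)
  have hgc : ContinuousOn (gradSq w) halfDisk := by
    have h1 := hwo.continuousOn_fderiv_of_isOpen hopen le_rfl
    unfold gradSq
    refine continuousOn_finsetSum _ fun i _ => ?_
    exact ((h1.clm_apply continuousOn_const).norm).pow 2
  have hg0 : ∀ x, 0 ≤ gradSq w x := fun x => Finset.sum_nonneg fun i _ => sq_nonneg _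
  have hgb : ∀ x ∈ halfDisk, gradSq w x ≤ 2 * C ^ 2 := fun x hx => by
    have h1 : ∀ i : Fin 2, ‖fderiv ℝ w x (EuclideanSpace.single i (1 : ℝ))‖ ^ 2 ≤ C ^ 2 := by
      intro i
      refine pow_le_pow_left₀ (norm_nonneg _) ?_ 2
      refine (ContinuousLinearMap.le_opNorm _ _).trans ?_
      simpa using hC' x hx
    unfold gradSq
    rw [Fin.sum_univ_two]
    linarith [h1 0, h1 1]
  set P : EuclideanSpace ℝ (Fin 2) → ℝ := fun x => ‖w x‖ ^ 2 / (1 - ‖x‖) ^ 2 with hP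
  have hPc : ContinuousOn P halfDisk := by
    apply (hwo.continuousOn.norm.pow 2).div (by fun_prop)
    intro x hx
    have := hx.1
    exact pow_ne_zero 2 (by linarith)
  have hPm : Measurable (halfDisk.indicator fun x => ENNReal.ofReal (P x)) := by
    have h1 : Measurable (halfDisk.indicator P) := by
      classical
      rw [← piecewise_eq_indicator]
      exact hPc.measurable_piecewise continuousOn_const hms
    have : (halfDisk.indicator fun x => ENNReal.ofReal (P x)) =
        fun x => ENNReal.ofReal (halfDisk.indicator P x) := by
      funext x; by_cases hx : x ∈ halfDisk <;> simp [hx]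
    rw [this]; exact h1.ennreal_ofReal
  have hgm : Measurable (halfDisk.indicator fun x => ENNReal.ofReal (gradSq w x)) := by
    have h1 : Measurable (halfDisk.indicator (gradSq w)) := by
      classical
      rw [← piecewise_eq_indicator]
      exact hgc.measurable_piecewise continuousOn_const hms
    have : (halfDisk.indicator fun x => ENNReal.ofReal (gradSq w x)) =
        fun x => ENNReal.ofReal (halfDisk.indicator (gradSq w) x) := by
      funext x; by_cases hx : x ∈ halfDisk <;> simp [hx]
    rw [this]; exact h1.ennreal_ofReal
  have key : ∫⁻ x in halfDisk, ENNReal.ofReal (P x) ≤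
      4 * ∫⁻ x in halfDisk, ENNReal.ofReal (gradSq w x) := by
    rw [← lintegral_indicator hms, ← lintegral_indicator hms, lintegral_polar _ hPm,
      lintegral_polar _ hgm, ← lintegral_const_mul' _ _ (by norm_num)]
    refine setLIntegral_mono' measurableSet_Ioo fun θ hθ => ?_
    rcases le_or_gt θ 0 with hneg | hpos
    · refine le_of_eq_of_le ?_ zero_le
      rw [setLIntegral_congr_fun (g := fun _ => 0) measurableSet_Ioi, lintegral_zero]
      intro r hr
      show _ * halfDisk.indicator _ _ = _
      rw [indicator_of_notMem (notMem_halfDisk_polar hr hθ hneg), mul_zero]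
    have hθ' : θ ∈ Ioo 0 π := ⟨hpos, hθ.2⟩
    rw [lintegral_ray _ hθ', lintegral_ray _ hθ']
    set c : ℝ → EuclideanSpace ℝ (Fin 2) := fun r => !₂[r * cos θ, r * sin θ] with hc
    have hce : ∀ r, c r = r • !₂[cos θ, sin θ] := fun r => by
      ext i; fin_cases i <;> simp [hc]
    have hmem : ∀ r ∈ Ioo (0:ℝ) 1, c r ∈ halfDisk := fun r hr =>
      (mem_halfDisk_polar hr.1 hθ').2 hr.2
    have hcc : Continuous c := by rw [hc]; fun_prop
    have hcd : ∀ r, HasDerivAt c !₂[cos θ, sin θ] r := fun r => by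
      have := (hasDerivAt_id r).smul_const (!₂[cos θ, sin θ] : EuclideanSpace ℝ (Fin 2))
      rw [one_smul] at this
      exact this.congr_of_eventuallyEq (Eventually.of_forall hce)
    have hω : ‖(!₂[cos θ, sin θ] : EuclideanSpace ℝ (Fin 2))‖ = 1 := by
      simpa using norm_polar 1 θ zero_le_one
    have hw1 : w !₂[cos θ, sin θ] = 0 := h0 _ hω (by
      simpa using (sin_pos_of_pos_of_lt_pi hθ'.1 hθ'.2).le)
    have := hardy_ray (fun r => w (c r)) (fun r => fderiv ℝ w (c r) !₂[cos θ, sin θ])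
      (fun r => gradSq w (c r)) C (2 * C ^ 2)
      (fun r hr => (hdiff _ (hmem r hr)).hasFDerivAt.comp_hasDerivAt r (hcd r))
      (fun r hr => by
        have h1 := hconv.norm_image_sub_le_of_norm_fderivWithin_le (𝕜 := ℝ)
          (hw.differentiableOn one_ne_zero) hC (arc_mem_closure hθ') (subset_closure (hmem r hr))
        have h2 : c r - !₂[cos θ, sin θ] =
            (-(1 - r)) • (!₂[cos θ, sin θ] : EuclideanSpace ℝ (Fin 2)) := by
          rw [hce]; module
        rw [hw1, sub_zero, h2, norm_smul, hω, norm_neg, mul_one,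
          Real.norm_of_nonneg (by linarith [hr.2])] at h1
        exact h1)
      (fun r hr => radial_le_gradSq w _ θ)
      (hgc.comp hcc.continuousOn hmem) (fun r hr => hgb _ (hmem r hr))
    refine le_of_eq_of_le ?_ this
    refine setLIntegral_congr_fun measurableSet_Ioo fun r hr => ?_
    simp only [hP]
    rw [norm_polar r θ hr.1.le]
  have hfin : ∫⁻ x in halfDisk, ENNReal.ofReal (gradSq w x) ≠ ⊤ := by
    have hi : IntegrableOn (gradSq w) halfDisk := by
      refine IntegrableOn.of_bound isBounded_halfDisk.measure_lt_top
        (hgc.aestronglyMeasurable hms) (2 * C ^ 2) ?_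
      refine (ae_restrict_iff' hms).2 (Eventually.of_forall fun x hx => ?_)
      rw [Real.norm_of_nonneg (hg0 x)]
      exact hgb x hx
    rw [← ofReal_integral_eq_lintegral_ofReal hi (Eventually.of_forall hg0)]
    exact ENNReal.ofReal_ne_top
  rw [integral_eq_lintegral_of_nonneg_ae (Eventually.of_forall fun x => by positivity)
      (hPc.aestronglyMeasurable hms),
    integral_eq_lintegral_of_nonneg_ae (Eventually.of_forall hg0) (hgc.aestronglyMeasurable hms)]
  have h4 := ENNReal.toReal_mono (ENNReal.mul_ne_top (by norm_num) hfin) key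
  rw [ENNReal.toReal_mul] at h4
  simpa using h4

end helpers

/-- Hardy's inequality on the half disk (Lemma 2.3): if `u, v` are `C¹` on the closed upper half
disk and agree on the arc `∂^A`, then
`∫_{D⁺} |v − u|²/(1 − |x|)² ≤ 4 ∫_{D⁺} |∇(v − u)|²`. -/
theorem stmt_0 (N : ℕ) (hN : 1 ≤ N)
    (u v : EuclideanSpace ℝ (Fin 2) → EuclideanSpace ℝ (Fin N))
    (hu : ContDiffOn ℝ 1 u (closure halfDisk))
    (hv : ContDiffOn ℝ 1 v (closure halfDisk))
    (hagree : ∀ x : EuclideanSpace ℝ (Fin 2), ‖x‖ = 1 → 0 ≤ x 1 → u x = v x) :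
    (∫ x in halfDisk, ‖v x - u x‖ ^ 2 / (1 - ‖x‖) ^ 2) ≤
      4 * ∫ x in halfDisk, gradSq (fun y => v y - u y) x := by
  exact hardy_halfDisk (fun y => v y - u y) (hv.sub hu)
    (fun x h1 h2 => by simp [hagree x h1 h2])
end

section
/- For every δ > 0 there exists l > 1, depending only on δ, with the following property: for all integers 0 ≤ k ≤ n, if u : [−3l, 3l] × [0, π] → ℝⁿ is a nonconstant map that is smooth on the closed half cylinder, harmonic (∂_t²u + ∂_θ²u = 0 componentwise), and satisfies the Euclidean free boundary conditions relative to ℝᵏ ⊂ ℝⁿ (for θ ∈ {0, π}: u^{k+1} = ⋯ = uⁿ = 0 and ∂_θ u¹ = ⋯ = ∂_θ uᵏ = 0), then ∫_{−l}^{l} ∫_0^π |∂_θ u|² dθ dt < δ ∫_{−2l}^{2l} ∫_0^π (|∂_t u|² + |∂_θ u|²) dθ dt. (The Euclidean case of the theta-energy estimate Theorem 8.3, which the paper invokes — without any smallness-of-energy hypothesis — for free boundary harmonic maps into (ℝⁿ, ℝᵏ) in Case 2 of the proof of Lemma 8.4.) -/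
open MeasureTheory

lemma aux_cont_param {g : ℝ → ℝ → ℝ} (hg : Continuous (Function.uncurry g)) (a b : ℝ) :
    Continuous (fun t => ∫ θ in a..b, g t θ) :=
  intervalIntegral.continuous_parametric_intervalIntegral_of_continuous' hg a b

lemma aux_slice {g : ℝ → ℝ → ℝ} (hg : Continuous (Function.uncurry g)) (t : ℝ) :
    Continuous (g t) := by
  exact hg.comp (Continuous.prodMk_right t)

lemma aux_deriv_param {g g' : ℝ → ℝ → ℝ} (hg : Continuous (Function.uncurry g))
    (hg' : Continuous (Function.uncurry g'))
    (hd : ∀ t θ, HasDerivAt (fun s => g s θ) (g' t θ) t) (a b t : ℝ) :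
    HasDerivAt (fun t => ∫ θ in a..b, g t θ) (∫ θ in a..b, g' t θ) t := by
  obtain ⟨C, hC⟩ := ((isCompact_Icc (a := t - 1) (b := t + 1)).prod
    (isCompact_uIcc (a := a) (b := b))).exists_bound_of_continuousOn hg'.continuousOn
  refine (intervalIntegral.hasDerivAt_integral_of_dominated_loc_of_deriv_le
    (s := Set.Icc (t - 1) (t + 1)) (bound := fun _ => C) (F := g) (F' := g') ?_ ?_ ?_ ?_ ?_ ?_ ?_).2
  · exact Icc_mem_nhds (by linarith) (by linarith)
  · exact Filter.Eventually.of_forall fun x => (aux_slice hg x).aestronglyMeasurable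
  · exact (aux_slice hg t).intervalIntegrable _ _
  · exact (aux_slice hg' t).aestronglyMeasurable
  · refine Filter.Eventually.of_forall fun θ hθ x hx => ?_
    exact hC (x, θ) ⟨hx, Set.uIoc_subset_uIcc hθ⟩
  · exact intervalIntegrable_const
  · exact Filter.Eventually.of_forall fun θ _ x _ => hd x θ

lemma aux_cs {f : ℝ → ℝ} (hf : Continuous f) :
    (∫ θ in (0:ℝ)..Real.pi, f θ) ^ 2 ≤ Real.pi * ∫ θ in (0:ℝ)..Real.pi, f θ ^ 2 := by
  have hpi := Real.pi_pos
  set m := (∫ θ in (0:ℝ)..Real.pi, f θ) / Real.pi with hm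
  have hI : (∫ θ in (0:ℝ)..Real.pi, f θ) = m * Real.pi := by rw [hm]; field_simp
  have h0 : 0 ≤ ∫ θ in (0:ℝ)..Real.pi, (f θ - m) ^ 2 :=
    intervalIntegral.integral_nonneg hpi.le fun _ _ => sq_nonneg _
  have h1 : (∫ θ in (0:ℝ)..Real.pi, (f θ - m) ^ 2)
      = (∫ θ in (0:ℝ)..Real.pi, f θ ^ 2) - (∫ θ in (0:ℝ)..Real.pi, 2 * m * f θ)
        + ∫ θ in (0:ℝ)..Real.pi, m ^ 2 := by
    rw [← intervalIntegral.integral_sub, ← intervalIntegral.integral_add]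
    · congr 1; ext θ; ring
    all_goals exact Continuous.intervalIntegrable (by fun_prop) _ _
  rw [intervalIntegral.integral_const_mul, intervalIntegral.integral_const, hI] at h1
  simp only [smul_eq_mul, sub_zero] at h1
  rw [hI]
  rw [h1] at h0
  nlinarith

/-- bound on the product -/
lemma aux_prod_bound {P Q h : ℝ → ℝ} (hP : Continuous P) (hQ : Continuous Q) (hh : Continuous h)
    (hb : ∀ θ ∈ Set.Icc 0 Real.pi, |h θ| ≤ ∫ θ in (0:ℝ)..Real.pi, |Q θ|) :
    |∫ θ in (0:ℝ)..Real.pi, P θ * h θ| ≤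
      Real.pi / 2 * ∫ θ in (0:ℝ)..Real.pi, (P θ ^ 2 + Q θ ^ 2) := by
  have hpi := Real.pi_pos
  set K := ∫ θ in (0:ℝ)..Real.pi, |Q θ|
  have h1 : |∫ θ in (0:ℝ)..Real.pi, P θ * h θ| ≤ ∫ θ in (0:ℝ)..Real.pi, |P θ| * K := by
    refine (intervalIntegral.abs_integral_le_integral_abs hpi.le).trans ?_
    refine intervalIntegral.integral_mono_on hpi.le
      (Continuous.intervalIntegrable (by fun_prop) _ _)
      (Continuous.intervalIntegrable (by fun_prop) _ _) fun θ hθ => ?_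
    rw [abs_mul]
    exact mul_le_mul_of_nonneg_left (hb θ hθ) (abs_nonneg _)
  rw [intervalIntegral.integral_mul_const] at h1
  have h2 := aux_cs hP.abs
  have h3 := aux_cs hQ.abs
  simp only [sq_abs] at h2 h3
  rw [intervalIntegral.integral_add (Continuous.intervalIntegrable (by fun_prop) _ _)
    (Continuous.intervalIntegrable (by fun_prop) _ _)]
  nlinarith [sq_nonneg ((∫ θ in (0:ℝ)..Real.pi, |P θ|) - K)]

lemma aux_osc {w Q : ℝ → ℝ} (hQ : Continuous Q) (hd : ∀ θ, HasDerivAt w (Q θ) θ)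
    {x y : ℝ} (hx : x ∈ Set.Icc 0 Real.pi) (hy : y ∈ Set.Icc 0 Real.pi) :
    |w y - w x| ≤ ∫ θ in (0:ℝ)..Real.pi, |Q θ| := by
  wlog hxy : x ≤ y generalizing x y
  · rw [abs_sub_comm]; exact this hy hx (le_of_not_ge hxy)
  rw [← intervalIntegral.integral_eq_sub_of_hasDerivAt (f' := Q) (fun θ _ => hd θ)
    (hQ.intervalIntegrable _ _)]
  refine (intervalIntegral.abs_integral_le_integral_abs hxy).trans ?_
  exact intervalIntegral.integral_mono_interval hx.1 hxy hy.2
    (Filter.Eventually.of_forall fun _ => abs_nonneg _) (hQ.abs.intervalIntegrable _ _)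

lemma aux_mean {w Q : ℝ → ℝ} (hQ : Continuous Q) (hd : ∀ θ, HasDerivAt w (Q θ) θ)
    {x : ℝ} (hx : x ∈ Set.Icc 0 Real.pi) :
    |w x - (∫ θ in (0:ℝ)..Real.pi, w θ) / Real.pi| ≤ ∫ θ in (0:ℝ)..Real.pi, |Q θ| := by
  have hpi := Real.pi_pos
  have hw : Continuous w := continuous_iff_continuousAt.2 fun θ => (hd θ).continuousAt
  have h1 : ‖∫ θ in (0:ℝ)..Real.pi, (w x - w θ)‖ ≤
      (∫ θ in (0:ℝ)..Real.pi, |Q θ|) * |Real.pi - 0| := by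
    apply intervalIntegral.norm_integral_le_of_norm_le_const
    intro θ hθ
    rw [Set.uIoc_of_le hpi.le] at hθ
    exact aux_osc hQ hd ⟨hθ.1.le, hθ.2⟩ hx
  rw [intervalIntegral.integral_sub intervalIntegrable_const (hw.intervalIntegrable _ _),
    intervalIntegral.integral_const, sub_zero, abs_of_pos hpi, Real.norm_eq_abs, smul_eq_mul] at h1
  have h2 : Real.pi * w x - (∫ θ in (0:ℝ)..Real.pi, w θ)
     = (w x - (∫ θ in (0:ℝ)..Real.pi, w θ) / Real.pi) * Real.pi := by field_simp
  rw [h2, abs_mul, abs_of_pos hpi] at h1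
  exact le_of_mul_le_mul_right h1 hpi

/-- one dimensional averaging -/
lemma aux_avg {l C : ℝ} (hl : 0 < l) (hC : 0 ≤ C) {A A' Θ E : ℝ → ℝ}
    (hA : ∀ t ∈ Set.Icc (-(2*l)) (2*l), HasDerivAt A (A' t) t)
    (hA'c : Continuous A') (hΘ : Continuous Θ) (hE : Continuous E)
    (hΘ0 : ∀ t, 0 ≤ Θ t) (hE0 : ∀ t, 0 ≤ E t)
    (h1 : ∀ t ∈ Set.Icc (-(2*l)) (2*l), Θ t ≤ A' t)
    (h2 : ∀ t ∈ Set.Icc (-(2*l)) (2*l), |A t| ≤ C * E t) :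
    l * (∫ t in (-l)..l, Θ t) ≤ C * ∫ t in (-(2*l))..(2*l), E t := by
  have key : ∀ s ∈ Set.Icc l (2*l), (∫ t in (-l)..l, Θ t) ≤ C * (E s + E (-s)) := by
    intro s hs
    obtain ⟨hs1, hs2⟩ := hs
    have a1 : (∫ t in (-l)..l, Θ t) ≤ ∫ t in (-s)..s, Θ t :=
      intervalIntegral.integral_mono_interval (by linarith) (by linarith) hs1
        (Filter.Eventually.of_forall hΘ0) (hΘ.intervalIntegrable _ _)
    have a2 : (∫ t in (-s)..s, Θ t) ≤ ∫ t in (-s)..s, A' t :=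
      intervalIntegral.integral_mono_on (by linarith) (hΘ.intervalIntegrable _ _)
        (hA'c.intervalIntegrable _ _) fun t ht => h1 t ⟨by linarith [ht.1], by linarith [ht.2]⟩
    have a3 : (∫ t in (-s)..s, A' t) = A s - A (-s) := by
      apply intervalIntegral.integral_eq_sub_of_hasDerivAt _ (hA'c.intervalIntegrable _ _)
      intro t ht
      rw [Set.uIcc_of_le (by linarith)] at ht
      exact hA t ⟨by linarith [ht.1], by linarith [ht.2]⟩
    have a4 := abs_le.1 (h2 s ⟨by linarith, by linarith⟩)
    have a5 := abs_le.1 (h2 (-s) ⟨by linarith, by linarith⟩)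
    linarith [a4.2, a5.1]
  have b1 : (∫ s in l..(2*l), (∫ t in (-l)..l, Θ t)) ≤ ∫ s in l..(2*l), C * (E s + E (-s)) :=
    intervalIntegral.integral_mono_on (by linarith) intervalIntegrable_const
      (Continuous.intervalIntegrable (by fun_prop) _ _) key
  rw [intervalIntegral.integral_const, intervalIntegral.integral_const_mul,
    intervalIntegral.integral_add (hE.intervalIntegrable _ _)
      (Continuous.intervalIntegrable (by fun_prop) _ _),
    intervalIntegral.integral_comp_neg (fun t => E t), smul_eq_mul] at b1
  have b2 : (∫ t in (-(2*l))..(2*l), E t) = (∫ t in (-(2*l))..(-l), E t) +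
      ((∫ t in (-l)..l, E t) + ∫ t in l..(2*l), E t) := by
    rw [intervalIntegral.integral_add_adjacent_intervals (hE.intervalIntegrable _ _)
      (hE.intervalIntegrable _ _), intervalIntegral.integral_add_adjacent_intervals
      (hE.intervalIntegrable _ _) (hE.intervalIntegrable _ _)]
  have b3 : 0 ≤ ∫ t in (-l)..l, E t :=
    intervalIntegral.integral_nonneg (by linarith) fun t _ => hE0 t
  rw [b2]
  have : 0 ≤ C * ∫ t in (-l)..l, E t := mul_nonneg hC b3
  nlinarith

lemma aux_core {l : ℝ} (hl : 0 < l) {w P Q S T : ℝ → ℝ → ℝ}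
    (cw : Continuous (Function.uncurry w)) (cP : Continuous (Function.uncurry P))
    (cQ : Continuous (Function.uncurry Q)) (cS : Continuous (Function.uncurry S))
    (cT : Continuous (Function.uncurry T))
    (dP : ∀ t θ, HasDerivAt (fun s => w s θ) (P t θ) t)
    (dS : ∀ t θ, HasDerivAt (fun s => P s θ) (S t θ) t)
    (dQ : ∀ t θ, HasDerivAt (w t) (Q t θ) θ)
    (dT : ∀ t θ, HasDerivAt (Q t) (T t θ) θ)
    (hharm : ∀ t ∈ Set.Icc (-(2*l)) (2*l), ∀ θ ∈ Set.Icc 0 Real.pi, S t θ + T t θ = 0)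
    (hbc : (∀ t ∈ Set.Icc (-(2*l)) (2*l), w t 0 = 0 ∧ w t Real.pi = 0) ∨
      (∀ t ∈ Set.Icc (-(2*l)) (2*l), Q t 0 = 0 ∧ Q t Real.pi = 0)) :
    l * (∫ t in (-l)..l, ∫ θ in (0:ℝ)..Real.pi, Q t θ ^ 2) ≤
      Real.pi / 2 * ∫ t in (-(2*l))..(2*l), ∫ θ in (0:ℝ)..Real.pi, (P t θ ^ 2 + Q t θ ^ 2) := by
  have hpi := Real.pi_pos
  have iP := fun t => aux_slice cP t
  have iQ := fun t => aux_slice cQ t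
  have iS := fun t => aux_slice cS t
  have iT := fun t => aux_slice cT t
  have iw := fun t => aux_slice cw t
  have cPw : Continuous (Function.uncurry fun t θ => P t θ * w t θ) := cP.mul cw
  have cD : Continuous (Function.uncurry fun t θ => S t θ * w t θ + P t θ * P t θ) :=
    (cS.mul cw).add (cP.mul cP)
  have cQ2 : Continuous (Function.uncurry fun t θ => Q t θ ^ 2) := cQ.pow 2
  have cE : Continuous (Function.uncurry fun t θ => P t θ ^ 2 + Q t θ ^ 2) :=
    (cP.pow 2).add (cQ.pow 2)
  have dA : ∀ t, HasDerivAt (fun t => ∫ θ in (0:ℝ)..Real.pi, P t θ * w t θ)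
      (∫ θ in (0:ℝ)..Real.pi, (S t θ * w t θ + P t θ * P t θ)) t := fun t =>
    aux_deriv_param cPw cD (fun t θ => (dS t θ).mul (dP t θ)) 0 Real.pi t
  have dM : ∀ t, HasDerivAt (fun t => ∫ θ in (0:ℝ)..Real.pi, w t θ)
      (∫ θ in (0:ℝ)..Real.pi, P t θ) t := fun t => aux_deriv_param cw cP dP 0 Real.pi t
  have dN : ∀ t, HasDerivAt (fun t => ∫ θ in (0:ℝ)..Real.pi, P t θ)
      (∫ θ in (0:ℝ)..Real.pi, S t θ) t := fun t => aux_deriv_param cP cS dS 0 Real.pi t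
  have hQ0 : ∀ t, 0 ≤ ∫ θ in (0:ℝ)..Real.pi, Q t θ ^ 2 := fun t =>
    intervalIntegral.integral_nonneg hpi.le fun _ _ => sq_nonneg _
  have hP0 : ∀ t, 0 ≤ ∫ θ in (0:ℝ)..Real.pi, P t θ ^ 2 := fun t =>
    intervalIntegral.integral_nonneg hpi.le fun _ _ => sq_nonneg _
  have hE0 : ∀ t, 0 ≤ ∫ θ in (0:ℝ)..Real.pi, (P t θ ^ 2 + Q t θ ^ 2) := fun t =>
    intervalIntegral.integral_nonneg hpi.le fun _ _ => by positivity
  have hval : ∀ t ∈ Set.Icc (-(2*l)) (2*l),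
      (∫ θ in (0:ℝ)..Real.pi, (S t θ * w t θ + P t θ * P t θ))
        = (∫ θ in (0:ℝ)..Real.pi, P t θ ^ 2) + ∫ θ in (0:ℝ)..Real.pi, Q t θ ^ 2 := by
    intro t ht
    have e1 : (∫ θ in (0:ℝ)..Real.pi, (S t θ * w t θ + P t θ * P t θ)) =
        ∫ θ in (0:ℝ)..Real.pi, ((P t θ ^ 2 + Q t θ ^ 2) -
          (T t θ * w t θ + Q t θ * Q t θ)) := by
      apply intervalIntegral.integral_congr
      intro θ hθ
      rw [Set.uIcc_of_le hpi.le] at hθ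
      have := hharm t ht θ hθ
      have : S t θ = - T t θ := by linarith
      simp only [this]; ring
    have e2 : (∫ θ in (0:ℝ)..Real.pi, (T t θ * w t θ + Q t θ * Q t θ)) =
        Q t Real.pi * w t Real.pi - Q t 0 * w t 0 :=
      intervalIntegral.integral_eq_sub_of_hasDerivAt
        (f := fun θ => Q t θ * w t θ) (fun θ _ => (dT t θ).mul (dQ t θ))
        ((((iT t).mul (iw t)).add ((iQ t).mul (iQ t))).intervalIntegrable _ _)
    have e3 : Q t Real.pi * w t Real.pi - Q t 0 * w t 0 = 0 := by
      rcases hbc with h | h <;> simp [h t ht]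
    rw [e1, intervalIntegral.integral_sub, e2, e3, intervalIntegral.integral_add, sub_zero]
    · exact ((iP t).pow 2).intervalIntegrable _ _
    · exact ((iQ t).pow 2).intervalIntegrable _ _
    · exact (((iP t).pow 2).add ((iQ t).pow 2)).intervalIntegrable _ _
    · exact (((iT t).mul (iw t)).add ((iQ t).mul (iQ t))).intervalIntegrable _ _
  rcases hbc with h | h
  · refine aux_avg hl (by positivity) (fun t _ => dA t) (aux_cont_param cD _ _)
      (aux_cont_param cQ2 _ _) (aux_cont_param cE _ _) hQ0 hE0 ?_ ?_
    · intro t ht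
      rw [hval t ht]
      linarith [hP0 t]
    · intro t ht
      refine aux_prod_bound (iP t) (iQ t) (iw t) fun θ hθ => ?_
      have := aux_osc (iQ t) (dQ t) (x := 0) (y := θ) ⟨le_rfl, hpi.le⟩ hθ
      rwa [(h t ht).1, sub_zero] at this
  · refine aux_avg hl (by positivity)
      (A := fun t => (∫ θ in (0:ℝ)..Real.pi, P t θ * w t θ) -
        (∫ θ in (0:ℝ)..Real.pi, P t θ) * (∫ θ in (0:ℝ)..Real.pi, w t θ) / Real.pi)
      (fun t _ => (dA t).sub (((dN t).mul (dM t)).div_const Real.pi)) ?_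
      (aux_cont_param cQ2 _ _) (aux_cont_param cE _ _) hQ0 hE0 ?_ ?_
    · have := aux_cont_param cD 0 Real.pi
      have := aux_cont_param cS 0 Real.pi
      have := aux_cont_param cP 0 Real.pi
      have := aux_cont_param cw 0 Real.pi
      fun_prop
    · intro t ht
      have e1 : (∫ θ in (0:ℝ)..Real.pi, S t θ) = 0 := by
        have e2 : (∫ θ in (0:ℝ)..Real.pi, S t θ) = ∫ θ in (0:ℝ)..Real.pi, - T t θ := by
          apply intervalIntegral.integral_congr
          intro θ hθ
          rw [Set.uIcc_of_le hpi.le] at hθ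
          have := hharm t ht θ hθ
          show S t θ = - T t θ
          linarith
        rw [e2, intervalIntegral.integral_neg,
          intervalIntegral.integral_eq_sub_of_hasDerivAt (f := Q t) (fun θ _ => dT t θ)
          ((iT t).intervalIntegrable _ _), (h t ht).1, (h t ht).2]
        simp
      rw [hval t ht, e1]
      have := aux_cs (iP t)
      have h3 : (∫ θ in (0:ℝ)..Real.pi, P t θ) * (∫ θ in (0:ℝ)..Real.pi, P t θ) / Real.pi ≤
          ∫ θ in (0:ℝ)..Real.pi, P t θ ^ 2 := by
        rw [div_le_iff₀ hpi]; linarith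
      rw [zero_mul, zero_add]
      linarith
    · intro t ht
      have := aux_prod_bound (iP t) (iQ t)
        (h := fun θ => w t θ - (∫ θ in (0:ℝ)..Real.pi, w t θ) / Real.pi)
        ((iw t).sub continuous_const) fun θ hθ => aux_mean (iQ t) (dQ t) hθ
      refine le_trans (le_of_eq ?_) this
      congr 1
      simp only [mul_sub]
      rw [intervalIntegral.integral_sub, intervalIntegral.integral_mul_const]
      · ring
      · exact ((iP t).mul (iw t)).intervalIntegrable _ _
      · exact ((iP t).mul continuous_const).intervalIntegrable _ _

lemma aux_ext {F : Type*} [NormedAddCommGroup F] [NormedSpace ℝ F] {u : ℝ × ℝ → F}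
    {U K : Set (ℝ × ℝ)} (hU : IsOpen U) (hK : IsClosed K) (hKU : K ⊆ U)
    (hu : ContDiffOn ℝ (⊤ : ℕ∞) u U) :
    ∃ v : ℝ × ℝ → F, ContDiff ℝ (⊤ : ℕ∞) v ∧ ∀ p ∈ K, v =ᶠ[nhds p] u := by
  obtain ⟨f, h0, h1, -⟩ := exists_contMDiffMap_zero_one_nhds_of_isClosed
    (modelWithCornersSelf ℝ (ℝ × ℝ)) (n := (⊤ : ℕ∞)) hU.isClosed_compl hK
    (by rw [← Set.subset_compl_iff_disjoint_left, compl_compl]; exact hKU)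
  have hf : ContDiff ℝ (⊤ : ℕ∞) f := f.contMDiff.contDiff
  refine ⟨fun p => f p • u p, ?_, ?_⟩
  · rw [contDiff_iff_contDiffAt]
    intro x
    by_cases hx : x ∈ U
    · exact hf.contDiffAt.smul (hu.contDiffAt (hU.mem_nhds hx))
    · have : ∀ᶠ y in nhds x, f y = 0 :=
        (Filter.eventually_iff.1 h0 |> fun h => nhds_le_nhdsSet (by exact hx) h)
      refine (contDiffAt_const (c := (0 : F))).congr_of_eventuallyEq ?_
      filter_upwards [this] with y hy
      simp [hy]
  · intro p hp
    have : ∀ᶠ y in nhds p, f y = 1 := nhds_le_nhdsSet hp h1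
    filter_upwards [this] with y hy
    simp [hy]

lemma aux_uc {w : ℝ × ℝ → ℝ} (hw : ContDiff ℝ (⊤ : ℕ∞) w) {l : ℝ} (hl : 0 < l)
    (hh : ∀ p ∈ Set.Icc (-(3 * l)) (3 * l) ×ˢ Set.Icc 0 Real.pi,
          fderiv ℝ (fun q => fderiv ℝ w q ((1 : ℝ), (0 : ℝ))) p ((1 : ℝ), (0 : ℝ))
            + fderiv ℝ (fun q => fderiv ℝ w q ((0 : ℝ), (1 : ℝ))) p ((0 : ℝ), (1 : ℝ)) = 0)
    (h0 : ∀ p ∈ Set.Ioo (-(2 * l)) (2 * l) ×ˢ Set.Ioo 0 Real.pi,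
      fderiv ℝ w p (1, 0) = 0 ∧ fderiv ℝ w p (0, 1) = 0) :
    ∃ c, ∀ p ∈ Set.Icc (-(3 * l)) (3 * l) ×ˢ Set.Icc 0 Real.pi, w p = c := by
  have hpi := Real.pi_pos
  let L : ℂ →L[ℝ] ℝ × ℝ := (Complex.equivRealProdCLM : ℂ →L[ℝ] ℝ × ℝ)
  have hL1 : L 1 = (1, 0) := by simp [L]
  have hLI : L Complex.I = (0, 1) := by simp [L]
  let f : ℂ → ℝ := w ∘ L
  have hf : ContDiff ℝ (⊤ : ℕ∞) f := hw.comp L.contDiff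
  have hwd : Differentiable ℝ w := hw.differentiable (by simp)
  have hwd1 : ∀ e, Differentiable ℝ (fun q => fderiv ℝ w q e) := fun e =>
    (((contDiff_infty.1 hw 2).fderiv_right (m := 1) (by norm_num)).clm_apply contDiff_const).differentiable
      (by simp)
  have hfd : ∀ z e, fderiv ℝ f z e = fderiv ℝ w (L z) (L e) := by
    intro z e
    have := ((hwd (L z)).hasFDerivAt.comp z L.hasFDerivAt).fderiv
    rw [show f = w ∘ L from rfl, this]; rfl
  have hfdd : ∀ z e, iteratedFDeriv ℝ 2 f z ![e, e] =
      fderiv ℝ (fun q => fderiv ℝ w q (L e)) (L z) (L e) := by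
    intro z e
    have hd : DifferentiableAt ℝ (fderiv ℝ f) z :=
      ((contDiff_infty.1 hf 2).fderiv_right (m := 1) (by norm_num)).differentiable (by simp) z
    rw [iteratedFDeriv_two_apply]
    simp only [Matrix.cons_val_zero, Matrix.cons_val_one]
    have e1 : fderiv ℝ (fun z => fderiv ℝ f z e) z e = fderiv ℝ (fderiv ℝ f) z e e := by
      rw [fderiv_clm_apply hd (differentiableAt_const _)]
      simp
    rw [← e1]
    have e2 : (fun z => fderiv ℝ f z e) = (fun q => fderiv ℝ w q (L e)) ∘ L := by
      ext z; exact hfd z e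
    rw [e2, ((hwd1 (L e) (L z)).hasFDerivAt.comp z L.hasFDerivAt).fderiv]; rfl
  let O : Set (ℝ × ℝ) := Set.Ioo (-(3 * l)) (3 * l) ×ˢ Set.Ioo 0 Real.pi
  let O' : Set (ℝ × ℝ) := Set.Ioo (-(2 * l)) (2 * l) ×ˢ Set.Ioo 0 Real.pi
  have hO : IsOpen O := isOpen_Ioo.prod isOpen_Ioo
  have hO' : IsOpen O' := isOpen_Ioo.prod isOpen_Ioo
  have hOc : Convex ℝ O := (convex_Ioo _ _).prod (convex_Ioo _ _)
  have hOc' : Convex ℝ O' := (convex_Ioo _ _).prod (convex_Ioo _ _)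
  have hOO : O' ⊆ O := Set.prod_mono (Set.Ioo_subset_Ioo (by linarith) (by linarith)) le_rfl
  have hOK : O ⊆ Set.Icc (-(3 * l)) (3 * l) ×ˢ Set.Icc 0 Real.pi :=
    Set.prod_mono Set.Ioo_subset_Icc_self Set.Ioo_subset_Icc_self
  have hlap : ∀ z, L z ∈ O → Laplacian.laplacian f z = 0 := by
    intro z hz
    rw [InnerProductSpace.laplacian_eq_iteratedFDeriv_complexPlane]
    simp only [hfdd, hL1, hLI]
    exact hh _ (hOK hz)
  have hOpen : IsOpen (L ⁻¹' O) := hO.preimage L.continuous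
  have hharm : ∀ z ∈ L ⁻¹' O, InnerProductSpace.HarmonicAt f z := by
    intro z hz
    refine ⟨(contDiff_infty.1 hf 2).contDiffAt, ?_⟩
    filter_upwards [hOpen.mem_nhds hz] with y hy using hlap y hy
  have han : AnalyticOnNhd ℝ f (L ⁻¹' O) := fun z hz => HarmonicAt.analyticAt (hharm z hz)
  let p0 : ℝ × ℝ := (0, Real.pi / 2)
  have hp0 : p0 ∈ O' := ⟨⟨by simp [p0]; linarith, by simp [p0]; linarith⟩,
    ⟨by simp [p0]; linarith, by simp [p0]; linarith⟩⟩
  have hconst : ∀ p ∈ O', w p = w p0 := by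
    intro p hp
    refine hO'.is_const_of_fderiv_eq_zero hOc'.isPreconnected hwd.differentiableOn ?_ hp hp0
    intro q hq
    ext
    · simpa using (h0 q hq).1
    · simpa using (h0 q hq).2
  let z0 : ℂ := Complex.equivRealProdCLM.symm p0
  have hz0 : L z0 = p0 := by simp [L, z0]
  have hEq : Set.EqOn f (fun _ => w p0) (L ⁻¹' O) := by
    refine han.eqOn_of_preconnected_of_eventuallyEq analyticOnNhd_const
      (hOc.linear_preimage (L : ℂ →ₗ[ℝ] ℝ × ℝ)).isPreconnected (z₀ := z0) ?_ ?_
    · show L z0 ∈ O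
      rw [hz0]; exact hOO hp0
    · have : L ⁻¹' O' ∈ nhds z0 := (hO'.preimage L.continuous).mem_nhds
        (by show L z0 ∈ O'; rw [hz0]; exact hp0)
      filter_upwards [this] with y hy using hconst _ hy
  refine ⟨w p0, ?_⟩
  have hEq2 : Set.EqOn w (fun _ => w p0) O := by
    intro p hp
    have hz : L (Complex.equivRealProdCLM.symm p) = p := by simp [L]
    have := hEq (x := Complex.equivRealProdCLM.symm p) (by show L _ ∈ O; rw [hz]; exact hp)
    simpa [f, hz] using this
  have := hEq2.closure hw.continuous continuous_const
  rw [show closure O = _ from closure_prod_eq, closure_Ioo (by linarith),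
    closure_Ioo hpi.ne] at this
  exact this

lemma aux_scalar {w : ℝ × ℝ → ℝ} (hw : ContDiff ℝ (⊤ : ℕ∞) w) {l : ℝ} (hl : 0 < l)
    (hh : ∀ p ∈ Set.Icc (-(3 * l)) (3 * l) ×ˢ Set.Icc 0 Real.pi,
          fderiv ℝ (fun q => fderiv ℝ w q ((1 : ℝ), (0 : ℝ))) p ((1 : ℝ), (0 : ℝ))
            + fderiv ℝ (fun q => fderiv ℝ w q ((0 : ℝ), (1 : ℝ))) p ((0 : ℝ), (1 : ℝ)) = 0)
    (hbc : (∀ t ∈ Set.Icc (-(3*l)) (3*l), w (t, 0) = 0 ∧ w (t, Real.pi) = 0) ∨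
      (∀ t ∈ Set.Icc (-(3*l)) (3*l), fderiv ℝ w (t, 0) (0, 1) = 0 ∧
        fderiv ℝ w (t, Real.pi) (0, 1) = 0)) :
    l * (∫ t in (-l)..l, ∫ θ in (0:ℝ)..Real.pi, (fderiv ℝ w (t, θ) (0, 1)) ^ 2) ≤
      Real.pi / 2 * ∫ t in (-(2*l))..(2*l), ∫ θ in (0:ℝ)..Real.pi,
        ((fderiv ℝ w (t, θ) (1, 0)) ^ 2 + (fderiv ℝ w (t, θ) (0, 1)) ^ 2) := by
  have hsub : ∀ t ∈ Set.Icc (-(2*l)) (2*l), t ∈ Set.Icc (-(3*l)) (3*l) := fun t ht =>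
    ⟨by linarith [ht.1], by linarith [ht.2]⟩
  have h1 : ∀ e, ContDiff ℝ 1 (fun q => fderiv ℝ w q e) := fun e =>
    ((contDiff_infty.1 hw 2).fderiv_right (m := 1) (by norm_num)).clm_apply contDiff_const
  have h2 : ∀ e e', Continuous (fun p => fderiv ℝ (fun q => fderiv ℝ w q e) p e') := fun e e' =>
    ((h1 e).continuous_fderiv (by simp)).clm_apply continuous_const
  have ht : ∀ t θ : ℝ, HasDerivAt (fun s : ℝ => (s, θ)) ((1 : ℝ), (0 : ℝ)) t := fun t θ =>
    (hasDerivAt_id t).prodMk (hasDerivAt_const t θ)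
  have hθ : ∀ t θ : ℝ, HasDerivAt (fun s : ℝ => (t, s)) ((0 : ℝ), (1 : ℝ)) θ := fun t θ =>
    (hasDerivAt_const θ t).prodMk (hasDerivAt_id θ)
  have dw : Differentiable ℝ w := hw.differentiable (by simp)
  have d1 : ∀ e, Differentiable ℝ (fun q => fderiv ℝ w q e) := fun e =>
    (h1 e).differentiable (by simp)
  exact aux_core hl (w := fun t θ => w (t, θ))
    (P := fun t θ => fderiv ℝ w (t, θ) (1, 0)) (Q := fun t θ => fderiv ℝ w (t, θ) (0, 1))
    (S := fun t θ => fderiv ℝ (fun q => fderiv ℝ w q ((1 : ℝ), (0 : ℝ))) (t, θ) (1, 0))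
    (T := fun t θ => fderiv ℝ (fun q => fderiv ℝ w q ((0 : ℝ), (1 : ℝ))) (t, θ) (0, 1))
    hw.continuous (h1 _).continuous (h1 _).continuous (h2 _ _) (h2 _ _)
    (fun t θ => (dw (t, θ)).hasFDerivAt.comp_hasDerivAt t (ht t θ))
    (fun t θ => HasFDerivAt.comp_hasDerivAt (l := fun q => fderiv ℝ w q (1, 0)) t
      (d1 (1, 0) (t, θ)).hasFDerivAt (ht t θ))
    (fun t θ => (dw (t, θ)).hasFDerivAt.comp_hasDerivAt θ (hθ t θ))
    (fun t θ => HasFDerivAt.comp_hasDerivAt (l := fun q => fderiv ℝ w q (0, 1)) θ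
      (d1 (0, 1) (t, θ)).hasFDerivAt (hθ t θ))
    (fun t ht θ hθ => hh (t, θ) ⟨hsub t ht, hθ⟩)
    (hbc.imp (fun h t ht => h t (hsub t ht)) (fun h t ht => h t (hsub t ht)))

lemma aux_global {n : ℕ} {v : ℝ × ℝ → EuclideanSpace ℝ (Fin n)}
    (hv : ContDiff ℝ (⊤ : ℕ∞) v) {l δ : ℝ} (hl : 0 < l) (hδ : Real.pi / 2 < δ * l) (k : ℕ)
    (hh : ∀ p ∈ Set.Icc (-(3 * l)) (3 * l) ×ˢ Set.Icc 0 Real.pi,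
          fderiv ℝ (fun q => fderiv ℝ v q ((1 : ℝ), (0 : ℝ))) p ((1 : ℝ), (0 : ℝ))
            + fderiv ℝ (fun q => fderiv ℝ v q ((0 : ℝ), (1 : ℝ))) p ((0 : ℝ), (1 : ℝ)) = 0)
    (hbc : ∀ t ∈ Set.Icc (-(3 * l)) (3 * l), ∀ θ ∈ ({0, Real.pi} : Set ℝ), ∀ j : Fin n,
          (k ≤ (j : ℕ) → v (t, θ) j = 0) ∧
          ((j : ℕ) < k → fderiv ℝ v (t, θ) ((0 : ℝ), (1 : ℝ)) j = 0))
    (hnc : ¬ ∀ p ∈ Set.Icc (-(3 * l)) (3 * l) ×ˢ Set.Icc 0 Real.pi,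
            ∀ q ∈ Set.Icc (-(3 * l)) (3 * l) ×ˢ Set.Icc 0 Real.pi, v p = v q) :
    (∫ t in (-l)..l, ∫ θ in (0 : ℝ)..Real.pi,
            ‖fderiv ℝ v (t, θ) ((0 : ℝ), (1 : ℝ))‖ ^ 2) <
          δ * ∫ t in (-(2 * l))..(2 * l), ∫ θ in (0 : ℝ)..Real.pi,
            (‖fderiv ℝ v (t, θ) ((1 : ℝ), (0 : ℝ))‖ ^ 2
              + ‖fderiv ℝ v (t, θ) ((0 : ℝ), (1 : ℝ))‖ ^ 2) := by
  have hpi := Real.pi_pos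
  have hvd : Differentiable ℝ v := hv.differentiable (by simp)
  have h1 : ∀ e, ContDiff ℝ 1 (fun q => fderiv ℝ v q e) := fun e =>
    ((contDiff_infty.1 hv 2).fderiv_right (m := 1) (by norm_num)).clm_apply contDiff_const
  have comp : ∀ (g : ℝ × ℝ → EuclideanSpace ℝ (Fin n)) (_ : Differentiable ℝ g) (j : Fin n) p e,
      fderiv ℝ (fun q => g q j) p e = fderiv ℝ g p e j := by
    intro g hg j p e
    have := ((EuclideanSpace.proj (𝕜 := ℝ) j).hasFDerivAt.comp p (hg p).hasFDerivAt).fderiv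
    exact congrArg (fun L => L e) this
  have hvj : ∀ j : Fin n, ContDiff ℝ (⊤ : ℕ∞) (fun q => v q j) := fun j =>
    (EuclideanSpace.proj (𝕜 := ℝ) j).contDiff.comp hv
  have cvj : ∀ (j : Fin n) e, Continuous (fun q => fderiv ℝ v q e j) := fun j e =>
    (EuclideanSpace.proj (𝕜 := ℝ) j).continuous.comp (h1 e).continuous
  have hhj : ∀ j : Fin n, ∀ p ∈ Set.Icc (-(3 * l)) (3 * l) ×ˢ Set.Icc 0 Real.pi,
      fderiv ℝ (fun q => fderiv ℝ (fun q => v q j) q ((1 : ℝ), (0 : ℝ))) p ((1 : ℝ), (0 : ℝ))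
      + fderiv ℝ (fun q => fderiv ℝ (fun q => v q j) q ((0 : ℝ), (1 : ℝ))) p ((0 : ℝ), (1 : ℝ))
        = 0 := by
    intro j p hp
    simp only [comp v hvd j]
    rw [comp _ ((h1 _).differentiable (by simp)) j, comp _ ((h1 _).differentiable (by simp)) j]
    exact congrArg (fun x => x j) (hh p hp)
  have hbcj : ∀ j : Fin n, _ := fun j => aux_scalar (hvj j) hl (hhj j) (by
    simp only [comp v hvd j]
    rcases le_or_gt k (j : ℕ) with hk | hk
    · exact Or.inl fun t ht => ⟨(hbc t ht 0 (by simp) j).1 hk, (hbc t ht Real.pi (by simp) j).1 hk⟩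
    · exact Or.inr fun t ht =>
        ⟨(hbc t ht 0 (by simp) j).2 hk, (hbc t ht Real.pi (by simp) j).2 hk⟩)
  simp only [comp v hvd] at hbcj
  -- the double integral commutes with finite sums
  have hsum : ∀ (g : Fin n → ℝ → ℝ → ℝ) (_ : ∀ j, Continuous (Function.uncurry (g j))) (a b : ℝ),
      (∫ t in a..b, ∫ θ in (0:ℝ)..Real.pi, ∑ j, g j t θ) =
        ∑ j, ∫ t in a..b, ∫ θ in (0:ℝ)..Real.pi, g j t θ := by
    intro g hg a b
    rw [← intervalIntegral.integral_finsetSum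
      (fun j _ => (aux_cont_param (hg j) _ _).intervalIntegrable _ _)]
    congr 1
    ext t
    rw [← intervalIntegral.integral_finsetSum
      (fun j _ => (aux_slice (hg j) t).intervalIntegrable _ _)]
  have hle : l * (∫ t in (-l)..l, ∫ θ in (0 : ℝ)..Real.pi,
            ‖fderiv ℝ v (t, θ) ((0 : ℝ), (1 : ℝ))‖ ^ 2) ≤
          Real.pi / 2 * ∫ t in (-(2 * l))..(2 * l), ∫ θ in (0 : ℝ)..Real.pi,
            (‖fderiv ℝ v (t, θ) ((1 : ℝ), (0 : ℝ))‖ ^ 2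
              + ‖fderiv ℝ v (t, θ) ((0 : ℝ), (1 : ℝ))‖ ^ 2) := by
    simp only [EuclideanSpace.real_norm_sq_eq, ← Finset.sum_add_distrib]
    rw [hsum (fun j t θ => (fderiv ℝ v (t, θ) ((0 : ℝ), (1 : ℝ)) j) ^ 2)
      (fun j => (continuous_pow 2).comp (cvj j (0, 1))),
      hsum (fun j t θ => (fderiv ℝ v (t, θ) ((1 : ℝ), (0 : ℝ)) j) ^ 2 +
        (fderiv ℝ v (t, θ) ((0 : ℝ), (1 : ℝ)) j) ^ 2)
      (fun j => Continuous.fun_add ((continuous_pow 2).comp (cvj j (1, 0)))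
        ((continuous_pow 2).comp (cvj j (0, 1)))), Finset.mul_sum, Finset.mul_sum]
    exact Finset.sum_le_sum fun j _ => hbcj j
  have cE : Continuous (Function.uncurry fun t θ : ℝ => ‖fderiv ℝ v (t, θ) ((1 : ℝ), (0 : ℝ))‖ ^ 2
              + ‖fderiv ℝ v (t, θ) ((0 : ℝ), (1 : ℝ))‖ ^ 2) :=
    ((h1 _).continuous.norm.pow 2).add ((h1 _).continuous.norm.pow 2)
  have hpos : 0 < ∫ t in (-(2 * l))..(2 * l), ∫ θ in (0 : ℝ)..Real.pi,
            (‖fderiv ℝ v (t, θ) ((1 : ℝ), (0 : ℝ))‖ ^ 2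
              + ‖fderiv ℝ v (t, θ) ((0 : ℝ), (1 : ℝ))‖ ^ 2) := by
    by_contra hneg
    apply hnc
    have hz : ∀ t ∈ Set.Ioo (-(2 * l)) (2 * l), ∀ θ ∈ Set.Ioo 0 Real.pi,
        ¬ 0 < ‖fderiv ℝ v (t, θ) ((1 : ℝ), (0 : ℝ))‖ ^ 2
              + ‖fderiv ℝ v (t, θ) ((0 : ℝ), (1 : ℝ))‖ ^ 2 := by
      intro t ht θ hθ hp
      apply hneg
      refine intervalIntegral.integral_pos (by linarith)
        (aux_cont_param cE 0 Real.pi).continuousOn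
        (fun s _ => intervalIntegral.integral_nonneg hpi.le fun _ _ => by positivity)
        ⟨t, Set.Ioo_subset_Icc_self ht, ?_⟩
      exact intervalIntegral.integral_pos hpi (aux_slice cE t).continuousOn
        (fun _ _ => by positivity) ⟨θ, Set.Ioo_subset_Icc_self hθ, hp⟩
    have hc : ∀ j : Fin n, ∃ c, ∀ p ∈ Set.Icc (-(3 * l)) (3 * l) ×ˢ Set.Icc 0 Real.pi,
        v p j = c := by
      intro j
      refine aux_uc (hvj j) hl (hhj j) fun p hp => ?_
      rw [comp v hvd, comp v hvd]
      have := hz p.1 hp.1 p.2 hp.2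
      have e1 : ‖fderiv ℝ v p ((1 : ℝ), (0 : ℝ))‖ = 0 := by
        by_contra hne
        exact this (by positivity)
      have e2 : ‖fderiv ℝ v p ((0 : ℝ), (1 : ℝ))‖ = 0 := by
        by_contra hne
        exact this (by positivity)
      rw [norm_eq_zero] at e1 e2
      simp [e1, e2]
    intro p hp q hq
    ext j
    obtain ⟨c, hc⟩ := hc j
    rw [hc p hp, hc q hq]
  have := mul_lt_mul_of_pos_right hδ hpos
  refine lt_of_mul_lt_mul_left (a := l) ?_ hl.le
  linarith

/-- Euclidean case of the theta-energy estimate (Theorem 8.3, as invoked in Case 2 of the proof of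
Lemma 8.4): for every `δ > 0` there is `l > 1`, depending only on `δ`, such that every nonconstant
smooth harmonic map `u` on the closed half cylinder `[−3l, 3l] × [0, π]` with the Euclidean free
boundary conditions relative to `ℝᵏ ⊂ ℝⁿ` satisfies
`∫_{C_{−l,l}} |∂_θ u|² < δ ∫_{C_{−2l,2l}} |∇u|²`. -/
theorem stmt_11 (δ : ℝ) (hδ : 0 < δ) :
    ∃ l : ℝ, 1 < l ∧
      ∀ (n k : ℕ), k ≤ n →
      ∀ (u : ℝ × ℝ → EuclideanSpace ℝ (Fin n)) (U : Set (ℝ × ℝ)),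
        IsOpen U →
        Set.Icc (-(3 * l)) (3 * l) ×ˢ Set.Icc 0 Real.pi ⊆ U →
        ContDiffOn ℝ (⊤ : ℕ∞) u U →
        (∀ p ∈ Set.Icc (-(3 * l)) (3 * l) ×ˢ Set.Icc 0 Real.pi,
          fderiv ℝ (fun q => fderiv ℝ u q ((1 : ℝ), (0 : ℝ))) p ((1 : ℝ), (0 : ℝ))
            + fderiv ℝ (fun q => fderiv ℝ u q ((0 : ℝ), (1 : ℝ))) p ((0 : ℝ), (1 : ℝ)) = 0) →
        (∀ t ∈ Set.Icc (-(3 * l)) (3 * l), ∀ θ ∈ ({0, Real.pi} : Set ℝ), ∀ j : Fin n,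
          (k ≤ (j : ℕ) → u (t, θ) j = 0) ∧
          ((j : ℕ) < k → fderiv ℝ u (t, θ) ((0 : ℝ), (1 : ℝ)) j = 0)) →
        (¬ ∀ p ∈ Set.Icc (-(3 * l)) (3 * l) ×ˢ Set.Icc 0 Real.pi,
            ∀ q ∈ Set.Icc (-(3 * l)) (3 * l) ×ˢ Set.Icc 0 Real.pi, u p = u q) →
        (∫ t in (-l)..l, ∫ θ in (0 : ℝ)..Real.pi,
            ‖fderiv ℝ u (t, θ) ((0 : ℝ), (1 : ℝ))‖ ^ 2) <
          δ * ∫ t in (-(2 * l))..(2 * l), ∫ θ in (0 : ℝ)..Real.pi,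
            (‖fderiv ℝ u (t, θ) ((1 : ℝ), (0 : ℝ))‖ ^ 2
              + ‖fderiv ℝ u (t, θ) ((0 : ℝ), (1 : ℝ))‖ ^ 2) := by
  have hpi := Real.pi_lt_four
  have hl : (1 : ℝ) < 2 + 2 / δ := by have : 0 < 2 / δ := by positivity
                                      linarith
  refine ⟨2 + 2 / δ, hl, ?_⟩
  have hlδ : Real.pi / 2 < δ * (2 + 2 / δ) := by
    have : δ * (2 + 2 / δ) = 2 * δ + 2 := by field_simp
    linarith
  generalize 2 + 2 / δ = l at hl hlδ
  intro n k _ u U hU hKU hu hh hbc hnc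
  have hl0 : 0 < l := by linarith
  set K : Set (ℝ × ℝ) := Set.Icc (-(3 * l)) (3 * l) ×ˢ Set.Icc 0 Real.pi with hK
  obtain ⟨v, hv, hvu⟩ := aux_ext hU (isClosed_Icc.prod isClosed_Icc) hKU hu
  have hd : ∀ p ∈ K, fderiv ℝ v p = fderiv ℝ u p := fun p hp => (hvu p hp).fderiv_eq
  have hdd : ∀ p ∈ K, ∀ e, fderiv ℝ (fun q => fderiv ℝ v q e) p =
      fderiv ℝ (fun q => fderiv ℝ u q e) p := by
    intro p hp e
    refine Filter.EventuallyEq.fderiv_eq ?_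
    filter_upwards [(hvu p hp).fderiv (𝕜 := ℝ)] with q hq
    rw [hq]
  have hv0 : ∀ p ∈ K, v p = u p := fun p hp => (hvu p hp).eq_of_nhds
  have hbd : ∀ t ∈ Set.Icc (-(3 * l)) (3 * l), ∀ θ ∈ ({0, Real.pi} : Set ℝ), (t, θ) ∈ K := by
    intro t ht θ hθ
    refine ⟨ht, ?_⟩
    rcases hθ with rfl | rfl
    · exact ⟨le_rfl, Real.pi_pos.le⟩
    · exact ⟨Real.pi_pos.le, le_rfl⟩
  have main := aux_global hv hl0 hlδ k
    (fun p hp => by rw [hdd p hp, hdd p hp]; exact hh p hp)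
    (fun t ht θ hθ j => by
      rw [hv0 _ (hbd t ht θ hθ), hd _ (hbd t ht θ hθ)]; exact hbc t ht θ hθ j)
    (fun h => hnc fun p hp q hq => by rw [← hv0 p hp, ← hv0 q hq]; exact h p hp q hq)
  have hint : ∀ (G : (ℝ × ℝ →L[ℝ] EuclideanSpace ℝ (Fin n)) → ℝ) (a : ℝ), 0 ≤ a → a ≤ 3 * l →
      (∫ t in (-a)..a, ∫ θ in (0 : ℝ)..Real.pi, G (fderiv ℝ v (t, θ))) =
      ∫ t in (-a)..a, ∫ θ in (0 : ℝ)..Real.pi, G (fderiv ℝ u (t, θ)) := by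
    intro G a ha0 ha
    apply intervalIntegral.integral_congr
    intro t ht
    rw [Set.uIcc_of_le (by linarith)] at ht
    apply intervalIntegral.integral_congr
    intro θ hθ
    rw [Set.uIcc_of_le Real.pi_pos.le] at hθ
    show G (fderiv ℝ v (t, θ)) = G (fderiv ℝ u (t, θ))
    rw [hd (t, θ) ⟨⟨by linarith [ht.1], by linarith [ht.2]⟩, hθ⟩]
  have i1 := hint (fun L => ‖L ((0 : ℝ), (1 : ℝ))‖ ^ 2) l (by linarith) (by linarith)
  have i2 := hint (fun L => ‖L ((1 : ℝ), (0 : ℝ))‖ ^ 2 + ‖L ((0 : ℝ), (1 : ℝ))‖ ^ 2) (2 * l)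
    (by linarith) (by linarith)
  rw [← i1, ← i2]
  exact main
end
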